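/- The k-dimensional skeleton of the normal fan of a rational full-dimensional polytope P ⊂ ℝ^n is k-connected through codimension one: its facet-ridge hypergraph (cones of dimension k as vertices, cones of dimension k-1 as hyperedges) remains connected after removing any k-1 of its k-dimensional cones. -/

import Mathlib

/-- A polyhedron: a finite intersection of affine halfspaces in `ℝ^n`. -/
def IsPolyhedron {n : ℕ} (P : Set (Fin n → ℝ)) : Prop :=
  ∃ s : Finset ((Fin n → ℝ) × ℝ), P = {x | ∀ p ∈ s, ∑ i, p.1 i * x i ≤ p.2}

/-- A rational polyhedron: cut out by finitely many rational affine halfspaces. -/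
def IsRationalPolyhedron {n : ℕ} (P : Set (Fin n → ℝ)) : Prop :=
  ∃ s : Finset ((Fin n → ℚ) × ℚ), P = {x | ∀ p ∈ s, ∑ i, (p.1 i : ℝ) * x i ≤ (p.2 : ℝ)}

/-- Dimension of a subset of `ℝ^n`: the dimension of its affine span. -/
noncomputable def polyDim {n : ℕ} (P : Set (Fin n → ℝ)) : ℕ :=
  Module.finrank ℝ (vectorSpan ℝ P)

/-- A polyhedral complex in `ℝ^n` (faces are nonempty polyhedra, closed under
nonempty pairwise intersection). -/
structure PolyhedralComplex (n : ℕ) where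
  faces : Set (Set (Fin n → ℝ))
  poly : ∀ P ∈ faces, IsPolyhedron P
  nonempty : ∀ P ∈ faces, P.Nonempty
  inter_mem : ∀ P ∈ faces, ∀ Q ∈ faces, (P ∩ Q).Nonempty → P ∩ Q ∈ faces

namespace PolyhedralComplex

variable {n : ℕ}

/-- The support of a polyhedral complex. -/
def support (C : PolyhedralComplex n) : Set (Fin n → ℝ) := ⋃₀ C.faces

/-- The facets: faces of dimension `d`. -/
def facets (C : PolyhedralComplex n) (d : ℕ) : Set (Set (Fin n → ℝ)) :=
  {P | P ∈ C.faces ∧ polyDim P = d}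

/-- The ridges: faces of dimension `d - 1`. -/
def ridges (C : PolyhedralComplex n) (d : ℕ) : Set (Set (Fin n → ℝ)) :=
  {P | P ∈ C.faces ∧ polyDim P = d - 1}

/-- Pure of dimension `d`: every face is contained in a `d`-dimensional face. -/
def IsPure (C : PolyhedralComplex n) (d : ℕ) : Prop :=
  (∀ P ∈ C.faces, polyDim P ≤ d) ∧ ∀ P ∈ C.faces, ∃ Q ∈ C.facets d, P ⊆ Q

def IsRational (C : PolyhedralComplex n) : Prop := ∀ P ∈ C.faces, IsRationalPolyhedron P

/-- Pointed: no face contains an affine line. -/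
def IsPointed (C : PolyhedralComplex n) : Prop :=
  ∀ P ∈ C.faces, ¬ ∃ (x v : Fin n → ℝ), v ≠ 0 ∧ ∀ t : ℝ, x + t • v ∈ P

/-- Adjacency in the facet-ridge hypergraph after deleting the facets in `G`
(and all hyperedges incident to them). -/
def Adj (C : PolyhedralComplex n) (d : ℕ) (G : Finset (Set (Fin n → ℝ)))
    (P Q : Set (Fin n → ℝ)) : Prop :=
  P ∈ C.facets d ∧ Q ∈ C.facets d ∧ P ∉ G ∧ Q ∉ G ∧
    ∃ R ∈ C.ridges d, R ⊆ P ∧ R ⊆ Q ∧ ∀ F ∈ G, ¬ R ⊆ F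

/-- `k`-connectedness through codimension one of a pure `d`-dimensional complex:
deleting any `k - 1` closed facets leaves the facet-ridge hypergraph connected. -/
def ConnectedThroughCodimOne (C : PolyhedralComplex n) (d k : ℕ) : Prop :=
  ∀ G : Finset (Set (Fin n → ℝ)), ↑G ⊆ C.facets d → G.card < k →
    ∀ P ∈ C.facets d, ∀ Q ∈ C.facets d, P ∉ G → Q ∉ G →
      Relation.ReflTransGen (C.Adj d G) P Q

end PolyhedralComplex

/-- A (nonarchimedean, additively written) real-valued valuation on a field. -/
structure TropValuation (K : Type*) [Field K] where
  val : K → ℝ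
  map_one : val 1 = 0
  map_mul : ∀ x y : K, x ≠ 0 → y ≠ 0 → val (x * y) = val x + val y
  map_add : ∀ x y : K, x ≠ 0 → y ≠ 0 → x + y ≠ 0 → min (val x) (val y) ≤ val (x + y)

/-- The zero set in the torus `(K*)^n` of an ideal of polynomials. -/
def torusZeroSet {K : Type*} [Field K] {n : ℕ} (I : Ideal (MvPolynomial (Fin n) K)) :
    Set (Fin n → Kˣ) :=
  {x | ∀ f ∈ I, MvPolynomial.eval (fun i => (x i : K)) f = 0}

/-- Tropicalization: closure of the coordinatewise valuation image. -/
def tropicalize {K : Type*} [Field K] (w : TropValuation K) {n : ℕ}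
    (X : Set (Fin n → Kˣ)) : Set (Fin n → ℝ) :=
  closure {p : Fin n → ℝ | ∃ x ∈ X, ∀ i, p i = w.val ((x i : K))}

/-- `S` is the tropicalization of an irreducible subvariety of the torus `(K*)^n`. -/
def IsTropOfIrred (K : Type*) [Field K] (w : TropValuation K) {n : ℕ}
    (S : Set (Fin n → ℝ)) : Prop :=
  ∃ I : Ideal (MvPolynomial (Fin n) K), I.IsPrime ∧ S = tropicalize w (torusZeroSet I)

/-- The vanishing ideal of a subset of the torus `(K*)^n`. -/
def vanishingIdeal {K : Type*} [Field K] {n : ℕ} (S : Set (Fin n → Kˣ)) :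
    Ideal (MvPolynomial (Fin n) K) where
  carrier := {f | ∀ x ∈ S, MvPolynomial.eval (fun i => (x i : K)) f = 0}
  add_mem' := by
    intro a b ha hb x hx
    simp [map_add, ha x hx, hb x hx]
  zero_mem' := by intro x hx; simp
  smul_mem' := by
    intro c f hf x hx
    simp [smul_eq_mul, map_mul, hf x hx]

/-- The affine hyperplane with normal vector `a` and level `b`. -/
def hplane {n : ℕ} (a : Fin n → ℝ) (b : ℝ) : Set (Fin n → ℝ) := {x | ∑ i, a i * x i = b}

/-- The ray spanned by a vector. -/
def ray {n : ℕ} (u : Fin n → ℝ) : Set (Fin n → ℝ) := {x | ∃ t : ℝ, 0 ≤ t ∧ x = t • u}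

/-- The cone spanned by two vectors. -/
def cone2 {n : ℕ} (u v : Fin n → ℝ) : Set (Fin n → ℝ) :=
  {x | ∃ s t : ℝ, 0 ≤ s ∧ 0 ≤ t ∧ x = s • u + t • v}

def IsIntVec {n : ℕ} (v : Fin n → ℝ) : Prop := ∀ i, ∃ k : ℤ, v i = (k : ℝ)

def IsPrimitiveVec {n : ℕ} (v : Fin n → ℝ) : Prop :=
  IsIntVec v ∧ v ≠ 0 ∧ ∀ (k : ℕ) (w : Fin n → ℝ), IsIntVec w → v = (k : ℝ) • w → k = 1

/-- Primitive integer vector modulo the subspace `W`. -/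
def PrimitiveMod {n : ℕ} (W : Submodule ℝ (Fin n → ℝ)) (v : Fin n → ℝ) : Prop :=
  IsIntVec v ∧ v ∉ W ∧
    ∀ m : ℕ, 2 ≤ m → ∀ w : Fin n → ℝ, IsIntVec w → v - (m : ℝ) • w ∈ W → w ∈ W

/-- `v` points from the ridge `τ` into the facet `σ`. -/
def PointsInto {n : ℕ} (τ σ : Set (Fin n → ℝ)) (v : Fin n → ℝ) : Prop :=
  ∃ x ∈ τ, ∃ δ : ℝ, 0 < δ ∧ ∀ t : ℝ, 0 < t → t ≤ δ → x + t • v ∈ σ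

/-- The tropical balancing condition with weights `m` at every ridge. -/
def PolyhedralComplex.IsBalanced {n : ℕ} (C : PolyhedralComplex n) (d : ℕ)
    (m : Set (Fin n → ℝ) → ℕ) : Prop :=
  (∀ σ ∈ C.facets d, 0 < m σ) ∧
  ∀ τ ∈ C.ridges d, ∃ (S : Finset (Set (Fin n → ℝ))) (v : Set (Fin n → ℝ) → (Fin n → ℝ)),
    (↑S = {σ | σ ∈ C.facets d ∧ τ ⊆ σ}) ∧
    (∀ σ ∈ S, PrimitiveMod (vectorSpan ℝ τ) (v σ) ∧ v σ ∈ vectorSpan ℝ σ ∧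
      PointsInto τ σ (v σ)) ∧
    (∑ σ ∈ S, (m σ : ℝ) • v σ) ∈ vectorSpan ℝ τ

/-- The face of `P` on which the linear functional `w` is maximized. -/
def maxFace {n : ℕ} (P : Set (Fin n → ℝ)) (w : Fin n → ℝ) : Set (Fin n → ℝ) :=
  {x | x ∈ P ∧ ∀ y ∈ P, ∑ i, w i * y i ≤ ∑ i, w i * x i}

/-- The cone of the normal fan of `P` associated to the face maximizing `w`. -/
def normalFanCone {n : ℕ} (P : Set (Fin n → ℝ)) (w : Fin n → ℝ) : Set (Fin n → ℝ) :=
  {u | maxFace P w ⊆ maxFace P u}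

open scoped Matrix
/-- Points of `W` maximizing the functional `u`. -/
noncomputable def argm {n : ℕ} (W : Finset (Fin n → ℝ)) (u : Fin n → ℝ) : Finset (Fin n → ℝ) :=
  haveI := Classical.decPred (fun v => ∀ v' ∈ W, u ⬝ᵥ v' ≤ u ⬝ᵥ v)
  W.filter (fun v => ∀ v' ∈ W, u ⬝ᵥ v' ≤ u ⬝ᵥ v)

/-- Functionals constant on `W`. -/
def Lc {n : ℕ} (W : Finset (Fin n → ℝ)) : Submodule ℝ (Fin n → ℝ) where
  carrier := {u | ∀ v ∈ W, ∀ v' ∈ W, u ⬝ᵥ v = u ⬝ᵥ v'}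
  add_mem' := by
    intro a b ha hb v hv v' hv'
    rw [add_dotProduct, add_dotProduct, ha v hv v' hv', hb v hv v' hv']
  zero_mem' := by intro v _ v' _; simp
  smul_mem' := by
    intro c a ha v hv v' hv'
    rw [smul_dotProduct, smul_dotProduct, ha v hv v' hv']

/-- Functionals vanishing on `T`. -/
def Kr {n : ℕ} (T : Set (Fin n → ℝ)) : Submodule ℝ (Fin n → ℝ) where
  carrier := {u | ∀ v ∈ T, u ⬝ᵥ v = 0}
  add_mem' := by
    intro a b ha hb v hv
    rw [add_dotProduct, ha v hv, hb v hv, add_zero]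
  zero_mem' := by intro v _; simp
  smul_mem' := by
    intro c a ha v hv
    rw [smul_dotProduct, ha v hv, smul_zero]

section
variable {n : ℕ}

theorem mem_argm {W : Finset (Fin n → ℝ)} {u v : Fin n → ℝ} :
    v ∈ argm W u ↔ v ∈ W ∧ ∀ v' ∈ W, u ⬝ᵥ v' ≤ u ⬝ᵥ v := by
  simp [argm]

theorem mem_Lc {W : Finset (Fin n → ℝ)} {u : Fin n → ℝ} :
    u ∈ Lc W ↔ ∀ v ∈ W, ∀ v' ∈ W, u ⬝ᵥ v = u ⬝ᵥ v' := Iff.rfl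

theorem mem_Kr {T : Set (Fin n → ℝ)} {u : Fin n → ℝ} :
    u ∈ Kr T ↔ ∀ v ∈ T, u ⬝ᵥ v = 0 := Iff.rfl

theorem argm_sub {W : Finset (Fin n → ℝ)} {u : Fin n → ℝ} : argm W u ⊆ W :=
  fun _ hv => (mem_argm.1 hv).1

theorem argm_nonempty {W : Finset (Fin n → ℝ)} (h : W.Nonempty) (u : Fin n → ℝ) :
    (argm W u).Nonempty := by
  obtain ⟨v, hv, h⟩ := W.exists_max_image (fun v => u ⬝ᵥ v) h
  exact ⟨v, mem_argm.2 ⟨hv, h⟩⟩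

theorem Lc_anti {A B : Finset (Fin n → ℝ)} (h : A ⊆ B) : Lc B ≤ Lc A :=
  fun _ hu v hv v' hv' => hu v (h hv) v' (h hv')

theorem self_mem_Lc_argm {W : Finset (Fin n → ℝ)} {u : Fin n → ℝ} : u ∈ Lc (argm W u) :=
  fun _ hv _ hv' => le_antisymm ((mem_argm.1 hv').2 _ (mem_argm.1 hv).1)
    ((mem_argm.1 hv).2 _ (mem_argm.1 hv').1)

theorem argm_of_Lc {W : Finset (Fin n → ℝ)} {u : Fin n → ℝ} (h : u ∈ Lc W) : argm W u = W := by
  ext v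
  rw [mem_argm]
  exact ⟨fun h => h.1, fun hv => ⟨hv, fun v' hv' => (h v' hv' v hv).le⟩⟩

/-- perturbation -/
theorem argm_perturb {V : Finset (Fin n → ℝ)} (hV : V.Nonempty) (w u : Fin n → ℝ) :
    ∃ ε : ℝ, 0 < ε ∧ argm V (w + ε • u) = argm (argm V w) u := by
  obtain ⟨v0, hv0⟩ := argm_nonempty (argm_nonempty hV w) u
  have h0 := mem_argm.1 hv0
  have h1 := mem_argm.1 h0.1
  have key : ∀ᶠ ε : ℝ in nhdsWithin 0 (Set.Ioi 0), ∀ v ∈ V, v ∉ argm V w →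
      0 < w ⬝ᵥ v0 - w ⬝ᵥ v + ε * (u ⬝ᵥ v0 - u ⬝ᵥ v) := by
    rw [Filter.eventually_all_finset]
    intro v hv
    by_cases hva : v ∈ argm V w
    · exact Filter.Eventually.of_forall fun _ h => absurd hva h
    have hlt : 0 < w ⬝ᵥ v0 - w ⬝ᵥ v := by
      by_contra hcon
      refine hva (mem_argm.2 ⟨hv, fun v' hv' => ?_⟩)
      have := h1.2 v' hv'
      linarith
    have hc : Filter.Tendsto (fun ε : ℝ => w ⬝ᵥ v0 - w ⬝ᵥ v + ε * (u ⬝ᵥ v0 - u ⬝ᵥ v))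
        (nhds 0) (nhds (w ⬝ᵥ v0 - w ⬝ᵥ v + 0 * (u ⬝ᵥ v0 - u ⬝ᵥ v))) :=
      (Continuous.tendsto (by fun_prop) 0)
    have := (hc.eventually (lt_mem_nhds (a := (0:ℝ)) (by rw [zero_mul, add_zero]; exact hlt)))
    exact (this.filter_mono nhdsWithin_le_nhds).mono fun _ h _ => h
  obtain ⟨ε, hε, hpos⟩ := (key.and self_mem_nhdsWithin).exists
  have hpos : 0 < ε := hpos
  refine ⟨ε, hpos, ?_⟩
  have hdot : ∀ v, (w + ε • u) ⬝ᵥ v = w ⬝ᵥ v + ε * (u ⬝ᵥ v) := by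
    intro v; rw [add_dotProduct, smul_dotProduct, smul_eq_mul]
  ext v
  constructor
  · intro hv
    have hv' := mem_argm.1 hv
    have hle := hv'.2 v0 h1.1
    rw [hdot, hdot] at hle
    have hva : v ∈ argm V w := by
      by_contra hcon
      have := hε v hv'.1 hcon
      nlinarith
    refine mem_argm.2 ⟨hva, fun v' hv' => ?_⟩
    have e := self_mem_Lc_argm v hva v0 h0.1
    have : ε * (u ⬝ᵥ v0) ≤ ε * (u ⬝ᵥ v) := by linarith
    have := le_of_mul_le_mul_left this hpos
    exact (h0.2 v' hv').trans this
  · intro hv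
    have hv' := mem_argm.1 hv
    refine mem_argm.2 ⟨argm_sub hv'.1, fun v1 hv1 => ?_⟩
    rw [hdot, hdot]
    have e := self_mem_Lc_argm v hv'.1 v0 h0.1
    have e2 : u ⬝ᵥ v = u ⬝ᵥ v0 := self_mem_Lc_argm v hv v0 hv0
    by_cases h : v1 ∈ argm V w
    · have e3 := self_mem_Lc_argm v1 h v0 h0.1
      have := mul_le_mul_of_nonneg_left (h0.2 v1 h) hpos.le
      rw [e, e2, e3]; linarith
    · have := hε v1 hv1 h
      rw [e, e2]; linarith

/-- `A` is (the vertex-set of) a face. -/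
def Fc (V A : Finset (Fin n → ℝ)) : Prop := ∃ w, A = argm V w

/-- dimension of the normal cone -/
noncomputable def rk (A : Finset (Fin n → ℝ)) : ℕ := Module.finrank ℝ (Lc A)

theorem Fc.sub {V A : Finset (Fin n → ℝ)} (h : Fc V A) : A ⊆ V := by
  obtain ⟨w, rfl⟩ := h; exact argm_sub

theorem Fc.nonempty {V A : Finset (Fin n → ℝ)} (hV : V.Nonempty) (h : Fc V A) : A.Nonempty := by
  obtain ⟨w, rfl⟩ := h; exact argm_nonempty hV w

theorem Fc.argm {V A : Finset (Fin n → ℝ)} (hV : V.Nonempty) (h : Fc V A) (u : Fin n → ℝ) :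
    Fc V (argm A u) := by
  obtain ⟨w, rfl⟩ := h
  obtain ⟨ε, _, h⟩ := argm_perturb hV w u
  exact ⟨_, h.symm⟩

theorem argm_restrict {V A B : Finset (Fin n → ℝ)} (hV : V.Nonempty) {w : Fin n → ℝ}
    (hA : A = argm V w) (hAB : A ⊆ B) (hB : B ⊆ V) : A = argm B w := by
  subst hA
  obtain ⟨v0, hv0⟩ := argm_nonempty hV w
  ext v
  constructor
  · intro hv
    exact mem_argm.2 ⟨hAB hv, fun v' hv' => (mem_argm.1 hv).2 v' (hB hv')⟩
  · intro hv
    have h := mem_argm.1 hv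
    exact mem_argm.2 ⟨hB h.1, fun v' hv' =>
      ((mem_argm.1 hv0).2 v' hv').trans (h.2 v0 (hAB hv0))⟩

theorem Fc.eq_of_sub {V A B : Finset (Fin n → ℝ)} (hV : V.Nonempty) (hA : Fc V A) (hB : Fc V B)
    (hAB : A ⊆ B) (hr : rk A = rk B) : A = B := by
  have hL : Lc B = Lc A := Submodule.eq_of_le_of_finrank_eq (Lc_anti hAB) hr.symm
  obtain ⟨w, hw⟩ := hA
  have h1 := argm_restrict hV hw hAB hB.sub
  have h2 : w ∈ Lc B := by rw [hL, hw]; exact self_mem_Lc_argm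
  rw [h1, argm_of_Lc h2]

/-- Extreme ray lemma. -/
theorem descent (T : Finset (Fin n → ℝ)) (c : Fin n → ℝ)
    (hc : ∀ z ∈ Kr (T : Set (Fin n → ℝ)), z ⬝ᵥ c = 0) :
    ∀ (N : ℕ) (u : Fin n → ℝ), (∀ g ∈ T, u ⬝ᵥ g ≤ 0) → 0 < u ⬝ᵥ c →
      {g | g ∈ T ∧ u ⬝ᵥ g ≠ 0}.ncard ≤ N →
    ∃ u' : Fin n → ℝ, (∀ g ∈ T, u' ⬝ᵥ g ≤ 0) ∧ 0 < u' ⬝ᵥ c ∧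
      (∀ g ∈ T, u ⬝ᵥ g = 0 → u' ⬝ᵥ g = 0) ∧
      Module.finrank ℝ (Kr {g | g ∈ T ∧ u' ⬝ᵥ g = 0}) =
        Module.finrank ℝ (Kr (T : Set (Fin n → ℝ))) + 1 := by
  intro N
  induction N with
  | zero =>
    intro u hu huc hN
    exfalso
    have hfin : {g | g ∈ T ∧ u ⬝ᵥ g ≠ 0}.Finite := T.finite_toSet.subset fun g hg => hg.1
    have h0 : {g | g ∈ T ∧ u ⬝ᵥ g ≠ 0} = ∅ := (Set.ncard_eq_zero hfin).1 (Nat.le_zero.1 hN)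
    have : u ∈ Kr (T : Set (Fin n → ℝ)) := by
      intro g hg
      by_contra h
      have : g ∈ ({g | g ∈ T ∧ u ⬝ᵥ g ≠ 0} : Set _) := ⟨hg, h⟩
      rw [h0] at this
      exact this
    exact huc.ne' (hc u this)
  | succ N ih =>
    intro u hu huc hN
    set K0 := Kr (T : Set (Fin n → ℝ)) with hK0
    set K1 := Kr {g | g ∈ T ∧ u ⬝ᵥ g = 0} with hK1
    have hle : K0 ≤ K1 := fun z hz g hg => hz g hg.1
    have huK1 : u ∈ K1 := fun g hg => hg.2
    have huK0 : u ∉ K0 := fun h => huc.ne' (hc u h)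
    have hlt : K0 < K1 := lt_of_le_of_ne hle fun h => huK0 (h ▸ huK1)
    have hfr := Submodule.finrank_lt_finrank_of_lt hlt
    by_cases heq : Module.finrank ℝ K1 = Module.finrank ℝ K0 + 1
    · exact ⟨u, hu, huc, fun _ _ h => h, heq⟩
    have hz : ∃ z ∈ K1, z ⬝ᵥ c = 0 ∧ z ∉ K0 := by
      by_contra hcon
      push Not at hcon
      have hsup : K1 ≤ K0 ⊔ Submodule.span ℝ {u} := by
        intro y hy
        have hy2 : y - (y ⬝ᵥ c / u ⬝ᵥ c) • u ∈ K0 := by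
          apply hcon _ (K1.sub_mem hy (K1.smul_mem _ huK1))
          rw [sub_dotProduct, smul_dotProduct, smul_eq_mul, div_mul_cancel₀ _ huc.ne', sub_self]
        refine Submodule.mem_sup.2 ⟨_, hy2, (y ⬝ᵥ c / u ⬝ᵥ c) • u,
          Submodule.smul_mem _ _ (Submodule.mem_span_singleton_self u), by simp⟩
      have h1 := Submodule.finrank_mono hsup
      have h2 := Submodule.finrank_add_le_finrank_add_finrank K0 (Submodule.span ℝ {u})
      have h3 := finrank_span_singleton (K := ℝ) (v := u) (fun h => huK0 (h ▸ K0.zero_mem))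
      omega
    have hz' : ∃ z ∈ K1, z ⬝ᵥ c = 0 ∧ ∃ g ∈ T, 0 < z ⬝ᵥ g := by
      obtain ⟨z, h1, h2, h3⟩ := hz
      have : ∃ g ∈ T, z ⬝ᵥ g ≠ 0 := by
        by_contra hcon
        push Not at hcon
        exact h3 hcon
      obtain ⟨g, hg, hne⟩ := this
      rcases lt_or_gt_of_ne hne with h | h
      · exact ⟨-z, K1.neg_mem h1, by simp [h2], g, hg, by simpa using h⟩
      · exact ⟨z, h1, h2, g, hg, h⟩
    obtain ⟨z, hz1, hzc, g0, hg0, hgpos⟩ := hz'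
    classical
    obtain ⟨g, hg, hmin⟩ := (T.filter (fun g => 0 < z ⬝ᵥ g)).exists_min_image
      (fun g => (-(u ⬝ᵥ g)) / (z ⬝ᵥ g)) ⟨g0, Finset.mem_filter.2 ⟨hg0, hgpos⟩⟩
    obtain ⟨hgT, hgz⟩ := Finset.mem_filter.1 hg
    set t := (-(u ⬝ᵥ g)) / (z ⬝ᵥ g) with ht
    have ht0 : 0 ≤ t := div_nonneg (by linarith [hu g hgT]) hgz.le
    have hdot : ∀ v, (u + t • z) ⬝ᵥ v = u ⬝ᵥ v + t * (z ⬝ᵥ v) := by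
      intro v; rw [add_dotProduct, smul_dotProduct, smul_eq_mul]
    have hgtight : (u + t • z) ⬝ᵥ g = 0 := by
      rw [hdot, ht, div_mul_cancel₀ _ hgz.ne']; ring
    have hgne : u ⬝ᵥ g ≠ 0 := fun h => hgz.ne' (hz1 g ⟨hgT, h⟩)
    have hkeep : ∀ g ∈ T, u ⬝ᵥ g = 0 → (u + t • z) ⬝ᵥ g = 0 := by
      intro g hg h
      rw [hdot, h, hz1 g ⟨hg, h⟩]; simp
    obtain ⟨u', a1, a2, a3, a4⟩ := ih (u + t • z) (by
      intro g' hg'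
      rw [hdot]
      by_cases hp : 0 < z ⬝ᵥ g'
      · have := hmin g' (Finset.mem_filter.2 ⟨hg', hp⟩)
        rw [le_div_iff₀ hp] at this
        linarith
      · have := mul_nonneg ht0 (by linarith : 0 ≤ -(z ⬝ᵥ g'))
        linarith [hu g' hg']) (by rw [hdot, hzc]; simpa using huc) (by
      have hss : {g | g ∈ T ∧ (u + t • z) ⬝ᵥ g ≠ 0} ⊂ {g | g ∈ T ∧ u ⬝ᵥ g ≠ 0} := by
        refine ⟨fun g' hg' => ⟨hg'.1, fun h => hg'.2 (hkeep g' hg'.1 h)⟩, fun hsub => ?_⟩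
        exact (hsub (show g ∈ {g | g ∈ T ∧ u ⬝ᵥ g ≠ 0} from ⟨hgT, hgne⟩)).2 hgtight
      have := Set.ncard_lt_ncard hss (T.finite_toSet.subset fun g hg => hg.1)
      omega)
    exact ⟨u', a1, a2, fun g hg h => a3 g hg (hkeep g hg h), a4⟩

theorem F1 {V f s : Finset (Fin n → ℝ)} (hV : V.Nonempty) (hf : Fc V f) (hs : Fc V s)
    (hfs : f ⊆ s) {v : Fin n → ℝ} (hv : v ∈ s) (hvf : v ∉ f) :
    ∃ τ, Fc V τ ∧ f ⊆ τ ∧ τ ⊆ s ∧ rk τ = rk s + 1 ∧ v ∉ τ := by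
  classical
  obtain ⟨f1, hf1⟩ := hf.nonempty hV
  obtain ⟨u, hu⟩ := hf
  have hfu := argm_restrict hV hu hfs hs.sub
  set T : Finset (Fin n → ℝ) := (s ×ˢ f).image (fun p => p.1 - p.2) with hT
  have hTmem : ∀ a ∈ s, ∀ b ∈ f, a - b ∈ T := fun a ha b hb =>
    Finset.mem_image.2 ⟨(a, b), Finset.mem_product.2 ⟨ha, hb⟩, rfl⟩
  have hKT : Kr (T : Set (Fin n → ℝ)) = Lc s := by
    ext z
    constructor
    · intro hz a ha b hb
      have h1 := hz _ (hTmem a ha f1 hf1)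
      have h2 := hz _ (hTmem b hb f1 hf1)
      rw [dotProduct_sub] at h1 h2
      linarith
    · intro hz g hg
      obtain ⟨⟨a, b⟩, hp, rfl⟩ := Finset.mem_image.1 (Finset.mem_coe.1 hg)
      obtain ⟨ha, hb⟩ := Finset.mem_product.1 hp
      have := hz a ha b (hfs hb)
      rw [dotProduct_sub]; simpa using sub_eq_zero.2 this
  have hf1' := hf1
  rw [hfu] at hf1'
  have huv : u ⬝ᵥ v < u ⬝ᵥ f1 := by
    by_contra hcon
    apply hvf
    rw [hfu]
    exact mem_argm.2 ⟨hv, fun v' hv' => ((mem_argm.1 hf1').2 v' hv').trans (not_lt.1 hcon)⟩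
  obtain ⟨u', h1, h2, h3, h4⟩ := descent T (f1 - v) (by
    intro z hz
    rw [hKT] at hz
    rw [dotProduct_sub, hz f1 (hfs hf1) v hv, sub_self]) _ u (by
    intro g hg
    obtain ⟨⟨a, b⟩, hp, rfl⟩ := Finset.mem_image.1 hg
    obtain ⟨ha, hb⟩ := Finset.mem_product.1 hp
    rw [hfu] at hb
    have := (mem_argm.1 hb).2 a ha
    rw [dotProduct_sub]; simpa using this) (by rw [dotProduct_sub]; linarith) le_rfl
  have hle : ∀ a ∈ s, ∀ b ∈ f, u' ⬝ᵥ a ≤ u' ⬝ᵥ b := by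
    intro a ha b hb
    have := h1 _ (hTmem a ha b hb)
    rw [dotProduct_sub] at this; linarith
  have hfτ : f ⊆ argm s u' := fun b hb => mem_argm.2 ⟨hfs hb, fun a ha => hle a ha b hb⟩
  refine ⟨argm s u', hs.argm hV u', hfτ, argm_sub, ?_, ?_⟩
  · rw [rk, rk, ← hKT, ← h4]
    have hEq : Lc (argm s u') = Kr {g | g ∈ T ∧ u' ⬝ᵥ g = 0} := by
      ext z
      have : z ∈ Lc (argm s u') ↔ z ∈ Kr {g | g ∈ T ∧ u' ⬝ᵥ g = 0} := by
        constructor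
        · rintro hz g ⟨hg, hg0⟩
          obtain ⟨⟨a, b⟩, hp, rfl⟩ := Finset.mem_image.1 hg
          obtain ⟨ha, hb⟩ := Finset.mem_product.1 hp
          simp only [dotProduct_sub] at hg0 ⊢
          have haτ : a ∈ argm s u' := mem_argm.2 ⟨ha, fun a' ha' => by
            have := hle a' ha' b hb; linarith⟩
          rw [hz a haτ b (hfτ hb), sub_self]
        · intro hz
          have key : ∀ a ∈ argm s u', z ⬝ᵥ a = z ⬝ᵥ f1 := by
            intro a ha
            have := hz (a - f1) ⟨hTmem a (argm_sub ha) f1 hf1, by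
              rw [dotProduct_sub, self_mem_Lc_argm a ha f1 (hfτ hf1), sub_self]⟩
            rw [dotProduct_sub] at this; linarith
          intro a ha b hb
          rw [key a ha, key b hb]
      rw [this]
    rw [hEq]
  · intro hvτ
    have := (mem_argm.1 hvτ).2 f1 (hfs hf1)
    rw [dotProduct_sub] at h2
    linarith

theorem F2 {V s : Finset (Fin n → ℝ)} (hV : V.Nonempty) (hs : Fc V s) (hr : rk s < n)
    {v : Fin n → ℝ} (hv : v ∈ s) :
    ∃ τ, Fc V τ ∧ τ ⊆ s ∧ rk τ = rk s + 1 ∧ v ∉ τ := by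
  have : ∃ v' ∈ s, v' ≠ v := by
    by_contra hcon
    push Not at hcon
    have : Lc s = ⊤ := by
      rw [eq_top_iff]
      intro z _ a ha b hb
      rw [hcon a ha, hcon b hb]
    rw [rk, this, finrank_top, Module.finrank_fin_fun] at hr
    exact lt_irrefl _ hr
  obtain ⟨v', hv', hne⟩ := this
  have hnf : v ∉ argm s (v' - v) := by
    intro h
    have h1 := (mem_argm.1 h).2 v' hv'
    have h2 : 0 < (v' - v) ⬝ᵥ (v' - v) := by
      have h0 : 0 ≤ (v' - v) ⬝ᵥ (v' - v) := Finset.sum_nonneg fun i _ => mul_self_nonneg _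
      refine lt_of_le_of_ne h0 fun h => hne (sub_eq_zero.1 (dotProduct_self_eq_zero.1 h.symm))
    rw [dotProduct_sub] at h2
    linarith
  obtain ⟨τ, h1, _, h3, h4, h5⟩ := F1 hV (hs.argm hV (v' - v)) hs argm_sub hv hnf
  exact ⟨τ, h1, h3, h4, h5⟩

end

section
variable {n : ℕ}

/-- A facet `a` of `s` with its normalized normal vector relative to `x`. -/
structure Nrm (V s : Finset (Fin n → ℝ)) (x : Fin n → ℝ) (a : Finset (Fin n → ℝ))
    (α : Fin n → ℝ) : Prop where
  fc : Fc V a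
  sub : a ⊆ s
  rk_eq : rk a = rk s + 1
  eq : a = argm s α
  one : ∀ v ∈ a, α ⬝ᵥ (v - x) = 1

theorem Nrm.le_one {V s : Finset (Fin n → ℝ)} (hV : V.Nonempty) {x : Fin n → ℝ}
    {a : Finset (Fin n → ℝ)} {α : Fin n → ℝ} (h : Nrm V s x a α) {v : Fin n → ℝ} (hv : v ∈ s) :
    α ⬝ᵥ (v - x) ≤ 1 := by
  obtain ⟨v0, hv0⟩ := h.fc.nonempty hV
  rw [← h.one v0 hv0]
  rw [h.eq] at hv0
  have := (mem_argm.1 hv0).2 v hv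
  rw [dotProduct_sub, dotProduct_sub]; linarith

theorem Nrm.mem_of {V s : Finset (Fin n → ℝ)} (hV : V.Nonempty) {x : Fin n → ℝ}
    {a : Finset (Fin n → ℝ)} {α : Fin n → ℝ} (h : Nrm V s x a α) {v : Fin n → ℝ} (hv : v ∈ s)
    (h1 : α ⬝ᵥ (v - x) = 1) : v ∈ a := by
  rw [h.eq]
  refine mem_argm.2 ⟨hv, fun v' hv' => ?_⟩
  have := h.le_one hV hv'
  rw [dotProduct_sub] at this h1; linarith

theorem Nrm.ker {V s : Finset (Fin n → ℝ)} (hV : V.Nonempty) {x : Fin n → ℝ}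
    (hx : ∀ z ∈ Lc s, ∀ v ∈ s, z ⬝ᵥ (v - x) = 0)
    {a : Finset (Fin n → ℝ)} {α : Fin n → ℝ} (h : Nrm V s x a α) {z : Fin n → ℝ}
    (hz : ∀ v ∈ a, z ⬝ᵥ (v - x) = 0) : z ∈ Lc s := by
  obtain ⟨v0, hv0⟩ := h.fc.nonempty hV
  have hα : α ∈ Lc a := by rw [h.eq]; exact self_mem_Lc_argm
  have hαs : α ∉ Lc s := by
    intro hcon
    have h1 := hx α hcon v0 (h.sub hv0)
    rw [h.one v0 hv0] at h1
    exact one_ne_zero h1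
  have hle : Lc s ⊔ Submodule.span ℝ {α} ≤ Lc a :=
    sup_le (Lc_anti h.sub) ((Submodule.span_singleton_le_iff_mem _ _).2 hα)
  have heq := Submodule.eq_of_le_of_finrank_eq hle (by
    rw [Submodule.finrank_sup_span_singleton hαs]; exact h.rk_eq.symm)
  have hza : z ∈ Lc a := by
    intro v hv v' hv'
    have h1 := hz v hv
    have h2 := hz v' hv'
    rw [dotProduct_sub] at h1 h2; linarith
  rw [← heq] at hza
  obtain ⟨l, hl, y, hy, rfl⟩ := Submodule.mem_sup.1 hza
  obtain ⟨t, rfl⟩ := Submodule.mem_span_singleton.1 hy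
  have h1 := hz v0 hv0
  rw [add_dotProduct, smul_dotProduct, hx l hl v0 (h.sub hv0), h.one v0 hv0] at h1
  have : t = 0 := by simpa using h1
  rw [this]; simpa using hl

theorem F3step {V s : Finset (Fin n → ℝ)} (hV : V.Nonempty) (hs : Fc V s) (hr : rk s + 2 ≤ n)
    {x : Fin n → ℝ} (hx : ∀ z ∈ Lc s, ∀ v ∈ s, z ⬝ᵥ (v - x) = 0)
    {a b : Finset (Fin n → ℝ)} {α β : Fin n → ℝ} (ha : Nrm V s x a α) (hb : Nrm V s x b β)
    (hab : a ≠ b) :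
    ∃ a' α', Nrm V s x a' α' ∧ α ⬝ᵥ (∑ v ∈ b, (v - x)) < α' ⬝ᵥ (∑ v ∈ b, (v - x)) ∧
      ∃ B, Fc V B ∧ B ⊆ a ∧ B ⊆ a' ∧ rk B = rk s + 2 := by
  classical
  set c := ∑ v ∈ b, (v - x) with hc
  have hcdot : ∀ z : Fin n → ℝ, z ⬝ᵥ c = ∑ v ∈ b, z ⬝ᵥ (v - x) := fun z => by
    rw [hc, dotProduct_sum]
  set T : Finset (Fin n → ℝ) := a.image (fun v => v - x) with hT
  have hKT : Kr (T : Set (Fin n → ℝ)) = Lc s := by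
    ext z
    constructor
    · intro hz
      exact ha.ker hV hx fun v hv => hz _ (Finset.mem_coe.2 (Finset.mem_image_of_mem _ hv))
    · intro hz g hg
      obtain ⟨v, hv, rfl⟩ := Finset.mem_image.1 (Finset.mem_coe.1 hg)
      exact hx z hz v (ha.sub hv)
  have hlt : α ⬝ᵥ c < β ⬝ᵥ c := by
    rw [hcdot, hcdot]
    have hnot : ∃ v ∈ b, v ∉ a := by
      by_contra hcon
      push Not at hcon
      exact hab (hb.fc.eq_of_sub hV ha.fc hcon (by rw [ha.rk_eq, hb.rk_eq])).symm
    obtain ⟨v, hv, hva⟩ := hnot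
    refine Finset.sum_lt_sum (fun v hv => ?_) ⟨v, hv, ?_⟩
    · rw [hb.one v hv]; exact ha.le_one hV (hb.sub hv)
    · rw [hb.one v hv]
      exact lt_of_le_of_ne (ha.le_one hV (hb.sub hv)) fun h => hva (ha.mem_of hV (hb.sub hv) h)
  obtain ⟨z, h1, h2, -, h4⟩ := descent T c (by
    intro z hz
    rw [hKT] at hz
    rw [hcdot]
    exact Finset.sum_eq_zero fun v hv => hx z hz v (hb.sub hv)) _ (β - α) (by
    intro g hg
    obtain ⟨v, hv, rfl⟩ := Finset.mem_image.1 hg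
    have := hb.le_one hV (ha.sub hv)
    have h' := ha.one v hv
    simp only [sub_dotProduct]
    linarith) (by rw [sub_dotProduct]; linarith) le_rfl
  have hza : ∀ v ∈ a, z ⬝ᵥ (v - x) ≤ 0 := fun v hv => h1 _ (Finset.mem_image_of_mem _ hv)
  rw [hKT] at h4
  have hne : ∃ v0 ∈ a, z ⬝ᵥ (v0 - x) = 0 := by
    by_contra hcon
    push Not at hcon
    have : Kr {g | g ∈ T ∧ z ⬝ᵥ g = 0} = ⊤ := by
      rw [eq_top_iff]
      rintro y - g ⟨hg, hg0⟩
      obtain ⟨v, hv, rfl⟩ := Finset.mem_image.1 hg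
      exact absurd hg0 (hcon v hv)
    rw [this, finrank_top, Module.finrank_fin_fun] at h4
    rw [rk] at hr
    omega
  obtain ⟨v0, hv0, hv00⟩ := hne
  have hB : ∀ v, v ∈ argm a z ↔ v ∈ a ∧ z ⬝ᵥ (v - x) = 0 := by
    intro v
    rw [mem_argm]
    constructor
    · rintro ⟨hv, h⟩
      refine ⟨hv, le_antisymm (hza v hv) ?_⟩
      have := h v0 hv0
      rw [dotProduct_sub] at hv00 ⊢; linarith
    · rintro ⟨hv, h⟩
      refine ⟨hv, fun v' hv' => ?_⟩
      have := hza v' hv'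
      rw [dotProduct_sub] at h this; linarith
  have hαa : α ∈ Lc a := by rw [ha.eq]; exact self_mem_Lc_argm
  have hrB : rk (argm a z) = rk s + 2 := by
    set K := Kr {g | g ∈ T ∧ z ⬝ᵥ g = 0} with hK
    have hmem : ∀ y, y ∈ K ↔ ∀ v ∈ argm a z, y ⬝ᵥ (v - x) = 0 := by
      intro y
      constructor
      · intro hy v hv
        exact hy _ ⟨Finset.mem_image_of_mem _ ((hB v).1 hv).1, ((hB v).1 hv).2⟩
      · rintro hy g ⟨hg, hg0⟩
        obtain ⟨v, hv, rfl⟩ := Finset.mem_image.1 hg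
        exact hy v ((hB v).2 ⟨hv, hg0⟩)
    have hv0B := (hB v0).2 ⟨hv0, hv00⟩
    have hαK : α ∉ K := by
      intro hcon
      have := (hmem α).1 hcon v0 hv0B
      rw [ha.one v0 hv0] at this
      exact one_ne_zero this
    have heq : Lc (argm a z) = K ⊔ Submodule.span ℝ {α} := by
      apply le_antisymm
      · intro y hy
        refine Submodule.mem_sup.2 ⟨y - (y ⬝ᵥ (v0 - x)) • α, ?_, (y ⬝ᵥ (v0 - x)) • α,
          Submodule.smul_mem _ _ (Submodule.mem_span_singleton_self _), by simp⟩
        rw [hmem]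
        intro v hv
        rw [sub_dotProduct, smul_dotProduct, ha.one v (argm_sub hv), dotProduct_sub,
          dotProduct_sub, hy v hv v0 hv0B]
        simp
      · refine sup_le ?_ ((Submodule.span_singleton_le_iff_mem _ _).2 (Lc_anti argm_sub hαa))
        intro y hy v hv v' hv'
        have e1 := (hmem y).1 hy v hv
        have e2 := (hmem y).1 hy v' hv'
        rw [dotProduct_sub] at e1 e2; linarith
    rw [rk, heq, Submodule.finrank_sup_span_singleton hαK, h4, rk]
  have hpos : ∃ v ∈ s, 0 < z ⬝ᵥ (v - x) := by
    by_contra hcon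
    push Not at hcon
    rw [hcdot] at h2
    exact absurd h2 (not_lt.2 (Finset.sum_nonpos fun v hv => hcon v (hb.sub hv)))
  obtain ⟨v1, hv1, hv1p⟩ := hpos
  obtain ⟨w, hw, hmin⟩ := (s.filter (fun v => 0 < z ⬝ᵥ (v - x))).exists_min_image
      (fun v => (1 - α ⬝ᵥ (v - x)) / (z ⬝ᵥ (v - x))) ⟨v1, Finset.mem_filter.2 ⟨hv1, hv1p⟩⟩
  obtain ⟨hws, hwz⟩ := Finset.mem_filter.1 hw
  set t := (1 - α ⬝ᵥ (w - x)) / (z ⬝ᵥ (w - x)) with ht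
  have hwa : w ∉ a := fun h => absurd hwz (not_lt.2 (hza w h))
  have hwlt : α ⬝ᵥ (w - x) < 1 :=
    lt_of_le_of_ne (ha.le_one hV hws) fun h => hwa (ha.mem_of hV hws h)
  have ht0 : 0 < t := div_pos (by linarith) hwz
  have hdot : ∀ v, (α + t • z) ⬝ᵥ v = α ⬝ᵥ v + t * (z ⬝ᵥ v) := by
    intro v; rw [add_dotProduct, smul_dotProduct, smul_eq_mul]
  have hle1 : ∀ v ∈ s, (α + t • z) ⬝ᵥ (v - x) ≤ 1 := by
    intro v hv
    rw [hdot]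
    by_cases hp : 0 < z ⬝ᵥ (v - x)
    · have := hmin v (Finset.mem_filter.2 ⟨hv, hp⟩)
      rw [le_div_iff₀ hp] at this
      linarith
    · have := mul_nonneg ht0.le (by linarith : 0 ≤ -(z ⬝ᵥ (v - x)))
      linarith [ha.le_one hV hv]
  have hw1 : (α + t • z) ⬝ᵥ (w - x) = 1 := by
    rw [hdot, ht, div_mul_cancel₀ _ hwz.ne']; ring
  have hA' : ∀ v, v ∈ argm s (α + t • z) ↔ v ∈ s ∧ (α + t • z) ⬝ᵥ (v - x) = 1 := by
    intro v
    rw [mem_argm]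
    constructor
    · rintro ⟨hv, h⟩
      refine ⟨hv, le_antisymm (hle1 v hv) ?_⟩
      have := h w hws
      rw [dotProduct_sub] at hw1 ⊢; linarith
    · rintro ⟨hv, h⟩
      refine ⟨hv, fun v' hv' => ?_⟩
      have := hle1 v' hv'
      rw [dotProduct_sub] at h this; linarith
  have hBA' : argm a z ⊆ argm s (α + t • z) := by
    intro v hv
    obtain ⟨hva, hvz⟩ := (hB v).1 hv
    refine (hA' v).2 ⟨ha.sub hva, ?_⟩
    rw [hdot, hvz, ha.one v hva]; simp
  have hwA' := (hA' w).2 ⟨hws, hw1⟩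
  have hrA' : rk (argm s (α + t • z)) = rk s + 1 := by
    have u1 : Lc (argm s (α + t • z)) < Lc (argm a z) := by
      refine lt_of_le_of_ne (Lc_anti hBA') fun heq => ?_
      have hz : z ∈ Lc (argm s (α + t • z)) := by rw [heq]; exact self_mem_Lc_argm
      have := hz w hwA' v0 (hBA' ((hB v0).2 ⟨hv0, hv00⟩))
      rw [dotProduct_sub] at hwz hv00
      linarith
    have u2 : Lc s < Lc (argm s (α + t • z)) := by
      refine lt_of_le_of_ne (Lc_anti argm_sub) fun heq => ?_
      have hz : α + t • z ∈ Lc s := by rw [heq]; exact self_mem_Lc_argm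
      have := hx _ hz w hws
      rw [hw1] at this
      exact one_ne_zero this
    have u1 := Submodule.finrank_lt_finrank_of_lt u1
    have u2 := Submodule.finrank_lt_finrank_of_lt u2
    rw [rk] at hrB ⊢
    rw [rk] at hrB ⊢
    omega
  refine ⟨argm s (α + t • z), α + t • z,
    ⟨hs.argm hV _, argm_sub, hrA', rfl, fun v hv => ((hA' v).1 hv).2⟩, ?_,
    argm a z, ha.fc.argm hV z, argm_sub, hBA', hrB⟩
  rw [hdot]
  have := mul_pos ht0 h2
  linarith

/-- Facets of `s` not containing `X`. -/
def OkF (V s X a : Finset (Fin n → ℝ)) : Prop :=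
  Fc V a ∧ a ⊆ s ∧ rk a = rk s + 1 ∧ ¬ X ⊆ a

/-- Adjacency of facets. -/
def OkAdj (V s X a a' : Finset (Fin n → ℝ)) : Prop :=
  OkF V s X a ∧ OkF V s X a' ∧ ∃ B, Fc V B ∧ B ⊆ a ∧ B ⊆ a' ∧ rk B = rk s + 2

theorem F3 {V s X : Finset (Fin n → ℝ)} (hV : V.Nonempty) (hs : Fc V s) (hr : rk s + 2 ≤ n)
    (hXs : X ⊆ s) (hX : X.Nonempty) {a b : Finset (Fin n → ℝ)} (ha : OkF V s X a)
    (hb : OkF V s X b) : Relation.ReflTransGen (OkAdj V s X) a b := by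
  classical
  have hcard : (0 : ℝ) < X.card := by exact_mod_cast hX.card_pos
  set x : Fin n → ℝ := (X.card : ℝ)⁻¹ • ∑ v ∈ X, v with hxdef
  have hxdot : ∀ z : Fin n → ℝ, (X.card : ℝ) * (z ⬝ᵥ x) = ∑ v ∈ X, z ⬝ᵥ v := by
    intro z
    rw [hxdef, dotProduct_smul, dotProduct_sum, smul_eq_mul, mul_inv_cancel_left₀ hcard.ne']
  have hx : ∀ z ∈ Lc s, ∀ v ∈ s, z ⬝ᵥ (v - x) = 0 := by
    intro z hz v hv
    have h1 := hxdot z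
    rw [Finset.sum_congr rfl (fun v' hv' => hz v' (hXs hv') v hv), Finset.sum_const,
      nsmul_eq_mul] at h1
    have := mul_left_cancel₀ hcard.ne' h1
    rw [dotProduct_sub, this, sub_self]
  have hnorm : ∀ a, OkF V s X a → ∃ α, Nrm V s x a α := by
    rintro a ⟨hfa, has, hra, hXa⟩
    obtain ⟨w, hw⟩ := hfa
    have hws := argm_restrict hV hw has hs.sub
    have hane : a.Nonempty := by rw [hw]; exact argm_nonempty hV w
    obtain ⟨v0, hv0⟩ := hane
    have hv0' := hv0
    rw [hws] at hv0'
    have hf : 0 < w ⬝ᵥ (v0 - x) := by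
      obtain ⟨v2, hv2, hv2a⟩ := Finset.not_subset.1 hXa
      have hlt : ∑ v ∈ X, w ⬝ᵥ v < ∑ v ∈ X, w ⬝ᵥ v0 := by
        refine Finset.sum_lt_sum (fun v hv => (mem_argm.1 hv0').2 v (hXs hv)) ⟨v2, hv2, ?_⟩
        by_contra hcon
        apply hv2a
        rw [hws]
        exact mem_argm.2 ⟨hXs hv2, fun v' hv' =>
          ((mem_argm.1 hv0').2 v' hv').trans (not_lt.1 hcon)⟩
      rw [← hxdot, Finset.sum_const, nsmul_eq_mul] at hlt
      have := lt_of_mul_lt_mul_left hlt hcard.le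
      rw [dotProduct_sub]; linarith
    have hwa : w ∈ Lc a := by rw [hw]; exact self_mem_Lc_argm
    refine ⟨(w ⬝ᵥ (v0 - x))⁻¹ • w, ⟨w, hw⟩, has, hra, ?_, ?_⟩
    · rw [hws]
      ext v
      rw [mem_argm, mem_argm]
      simp only [smul_dotProduct, smul_eq_mul, mul_le_mul_iff_right₀ (inv_pos.2 hf)]
    · intro v hv
      have : w ⬝ᵥ (v - x) = w ⬝ᵥ (v0 - x) := by
        rw [dotProduct_sub, dotProduct_sub, hwa v hv v0 hv0]
      rw [smul_dotProduct, this, smul_eq_mul, inv_mul_cancel₀ hf.ne']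
  have hok : ∀ a α, Nrm V s x a α → OkF V s X a := by
    intro a α h
    refine ⟨h.fc, h.sub, h.rk_eq, fun hsub => ?_⟩
    have h1 : ∑ v ∈ X, α ⬝ᵥ (v - x) = X.card := by
      rw [Finset.sum_congr rfl (fun v hv => h.one v (hsub hv))]; simp
    have h2 : ∑ v ∈ X, α ⬝ᵥ (v - x) = 0 := by
      simp only [dotProduct_sub]
      rw [Finset.sum_sub_distrib, ← hxdot, Finset.sum_const, nsmul_eq_mul, sub_self]
    rw [h1] at h2
    exact hcard.ne' h2
  obtain ⟨β, hβ⟩ := hnorm b hb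
  set c := ∑ v ∈ b, (v - x) with hc
  have huniq : ∀ a α α', Nrm V s x a α → Nrm V s x a α' → α ⬝ᵥ c = α' ⬝ᵥ c := by
    intro a α α' h h'
    have hd : α - α' ∈ Lc s := h.ker hV hx fun v hv => by
      rw [sub_dotProduct, h.one v hv, h'.one v hv, sub_self]
    have : (α - α') ⬝ᵥ c = 0 := by
      rw [hc, dotProduct_sum]
      exact Finset.sum_eq_zero fun v hv => hx _ hd v (hβ.sub hv)
    rw [sub_dotProduct] at this; linarith
  have main : ∀ N : ℕ, ∀ a α, Nrm V s x a α →
      (s.powerset.filter (fun a' => ∃ α', Nrm V s x a' α' ∧ α ⬝ᵥ c < α' ⬝ᵥ c)).card ≤ N →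
      Relation.ReflTransGen (OkAdj V s X) a b := by
    intro N
    induction N with
    | zero =>
      intro a α h hN
      by_cases hab : a = b
      · rw [hab]
      obtain ⟨a', α', h', hlt, -⟩ := F3step hV hs hr hx h hβ hab
      have : a' ∈ s.powerset.filter (fun a' => ∃ α', Nrm V s x a' α' ∧ α ⬝ᵥ c < α' ⬝ᵥ c) :=
        Finset.mem_filter.2 ⟨Finset.mem_powerset.2 h'.sub, α', h', hlt⟩
      rw [Finset.card_eq_zero.1 (Nat.le_zero.1 hN)] at this
      simp at this
    | succ N ih =>
      intro a α h hN
      by_cases hab : a = b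
      · rw [hab]
      obtain ⟨a', α', h', hlt, hB⟩ := F3step hV hs hr hx h hβ hab
      refine Relation.ReflTransGen.head ⟨hok a α h, hok a' α' h', hB⟩ (ih a' α' h' ?_)
      have hss : s.powerset.filter (fun a'' => ∃ α'', Nrm V s x a'' α'' ∧ α' ⬝ᵥ c < α'' ⬝ᵥ c) ⊂
          s.powerset.filter (fun a'' => ∃ α'', Nrm V s x a'' α'' ∧ α ⬝ᵥ c < α'' ⬝ᵥ c) := by
        refine (Finset.ssubset_iff_of_subset ?_).2 ⟨a', ?_, ?_⟩
        · intro y hy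
          obtain ⟨hy1, γ, hy2, hy3⟩ := Finset.mem_filter.1 hy
          exact Finset.mem_filter.2 ⟨hy1, γ, hy2, hlt.trans hy3⟩
        · exact Finset.mem_filter.2 ⟨Finset.mem_powerset.2 h'.sub, α', h', hlt⟩
        · intro hy
          obtain ⟨-, γ, hy2, hy3⟩ := Finset.mem_filter.1 hy
          exact hy3.ne (huniq a' α' γ h' hy2)
      have := Finset.card_lt_card hss
      omega
  obtain ⟨α, hα⟩ := hnorm a ha
  exact main _ a α hα le_rfl

end

section
variable {n : ℕ}

/-- Members of `S` contained in `s`. -/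
noncomputable def rst (S : Finset (Finset (Fin n → ℝ))) (s : Finset (Fin n → ℝ)) :
    Finset (Finset (Fin n → ℝ)) :=
  haveI := Classical.decPred (fun t : Finset (Fin n → ℝ) => t ⊆ s)
  S.filter (fun t => t ⊆ s)

theorem mem_rst {S : Finset (Finset (Fin n → ℝ))} {s t : Finset (Fin n → ℝ)} :
    t ∈ rst S s ↔ t ∈ S ∧ t ⊆ s := by simp [rst]

theorem rst_mono {S : Finset (Finset (Fin n → ℝ))} {s s' : Finset (Fin n → ℝ)} (h : s ⊆ s') :
    rst S s ⊆ rst S s' := fun _ ht =>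
  mem_rst.2 ⟨(mem_rst.1 ht).1, (mem_rst.1 ht).2.trans h⟩

theorem rst_card_lt {S : Finset (Finset (Fin n → ℝ))} {s s' t : Finset (Fin n → ℝ)} (h : s ⊆ s')
    (ht : t ∈ rst S s') (hts : ¬ t ⊆ s) : (rst S s).card < (rst S s').card :=
  Finset.card_lt_card ((Finset.ssubset_iff_of_subset (rst_mono h)).2
    ⟨t, ht, fun h => hts (mem_rst.1 h).2⟩)

/-- surviving `k`-cones -/
def Good (V : Finset (Fin n → ℝ)) (k : ℕ) (S : Finset (Finset (Fin n → ℝ)))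
    (p : Finset (Fin n → ℝ)) : Prop := Fc V p ∧ rk p = k ∧ p ∉ S

/-- adjacency of surviving `k`-cones -/
def GAdj (V : Finset (Fin n → ℝ)) (k : ℕ) (S : Finset (Finset (Fin n → ℝ)))
    (p q : Finset (Fin n → ℝ)) : Prop :=
  Good V k S p ∧ Good V k S q ∧ ∃ R, Fc V R ∧ rk R = k - 1 ∧ p ⊆ R ∧ q ⊆ R ∧ ∀ t ∈ S, ¬ t ⊆ R

theorem exists_good {V : Finset (Fin n → ℝ)} (hV : V.Nonempty) {k : ℕ} (hkn : k ≤ n)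
    (S : Finset (Finset (Fin n → ℝ))) (hS : ∀ t ∈ S, Fc V t) :
    ∀ (m : ℕ) (B : Finset (Fin n → ℝ)), Fc V B → rk B + m = k → (rst S B).card ≤ m →
      ∃ q, Good V k S q ∧ q ⊆ B := by
  intro m
  induction m with
  | zero =>
    intro B hB hr hc
    refine ⟨B, ⟨hB, hr, fun h => ?_⟩, subset_rfl⟩
    have : B ∈ rst S B := mem_rst.2 ⟨h, subset_rfl⟩
    rw [Finset.card_eq_zero.1 (Nat.le_zero.1 hc)] at this
    simp at this
  | succ m ih =>
    intro B hB hr hc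
    by_cases he : (rst S B).Nonempty
    · obtain ⟨t, ht⟩ := he
      obtain ⟨v, hv⟩ := (hS t (mem_rst.1 ht).1).nonempty hV
      obtain ⟨τ, h1, h2, h3, h4⟩ := F2 hV hB (by omega) ((mem_rst.1 ht).2 hv)
      have := rst_card_lt h2 ht (fun h => h4 (h hv))
      obtain ⟨q, hq, hqτ⟩ := ih τ h1 (by omega) (by omega)
      exact ⟨q, hq, hqτ.trans h2⟩
    · obtain ⟨v, hv⟩ := hB.nonempty hV
      obtain ⟨τ, h1, h2, h3, h4⟩ := F2 hV hB (by omega) hv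
      have hz : (rst S B).card = 0 := by
        rw [Finset.card_eq_zero]; exact Finset.not_nonempty_iff_eq_empty.1 he
      have := Finset.card_le_card (rst_mono (S := S) h2)
      obtain ⟨q, hq, hqτ⟩ := ih τ h1 (by omega) (by omega)
      exact ⟨q, hq, hqτ.trans h2⟩

theorem main_conn {V : Finset (Fin n → ℝ)} (hV : V.Nonempty) {k : ℕ} (hkn : k ≤ n)
    (S : Finset (Finset (Fin n → ℝ))) (hS : ∀ t ∈ S, Fc V t ∧ rk t = k) :
    ∀ (m : ℕ) (s : Finset (Fin n → ℝ)), Fc V s → rk s + (m + 1) = k → (rst S s).card ≤ m →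
      ∀ p q, Good V k S p → Good V k S q → p ⊆ s → q ⊆ s →
        Relation.ReflTransGen (GAdj V k S) p q := by
  classical
  intro m
  induction m with
  | zero =>
    intro s hs hr hc p q hp hq hps hqs
    refine Relation.ReflTransGen.single ⟨hp, hq, s, hs, by omega, hps, hqs, fun t ht hts => ?_⟩
    have : t ∈ rst S s := mem_rst.2 ⟨ht, hts⟩
    rw [Finset.card_eq_zero.1 (Nat.le_zero.1 hc)] at this
    simp at this
  | succ m ih =>
    intro s hs hr hc
    obtain ⟨X, hXs, hXne, hXa, hXp⟩ : ∃ X : Finset (Fin n → ℝ), X ⊆ s ∧ X.Nonempty ∧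
        (∀ a, OkF V s X a → (rst S a).card ≤ m) ∧
        (∀ p, Good V k S p → p ⊆ s → ∃ v ∈ X, v ∉ p) := by
      by_cases hcase : (rst S s).card = m + 1
      · obtain ⟨t, ht⟩ : (rst S s).Nonempty := Finset.card_pos.1 (by omega)
        obtain ⟨v, hv⟩ := (hS t (mem_rst.1 ht).1).1.nonempty hV
        refine ⟨(rst S s).biUnion id, ?_, ⟨v, Finset.mem_biUnion.2 ⟨t, ht, hv⟩⟩, ?_, ?_⟩
        · intro y hy
          obtain ⟨t', ht', hy'⟩ := Finset.mem_biUnion.1 hy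
          exact (mem_rst.1 ht').2 hy'
        · rintro a ⟨_, has, _, hXa⟩
          obtain ⟨y, hy, hya⟩ := Finset.not_subset.1 hXa
          obtain ⟨t', ht', hy'⟩ := Finset.mem_biUnion.1 hy
          have := rst_card_lt has ht' (fun h => hya (h hy'))
          omega
        · intro p hp hps
          have hnot : ¬ t ⊆ p := by
            intro h
            have := (hS t (mem_rst.1 ht).1)
            have e := this.1.eq_of_sub hV hp.1 h (by rw [this.2, hp.2.1])
            exact hp.2.2 (e ▸ (mem_rst.1 ht).1)
          obtain ⟨y, hy, hyp⟩ := Finset.not_subset.1 hnot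
          exact ⟨y, Finset.mem_biUnion.2 ⟨t, ht, hy⟩, hyp⟩
      · refine ⟨s, subset_rfl, hs.nonempty hV, ?_, ?_⟩
        · rintro a ⟨_, has, _, _⟩
          have := Finset.card_le_card (rst_mono (S := S) has)
          omega
        · intro p hp hps
          by_contra hcon
          push Not at hcon
          have : p = s := Finset.Subset.antisymm hps hcon
          have h2 := hp.2.1
          rw [this] at h2
          omega
    have hin : ∀ p, Good V k S p → p ⊆ s → ∃ a, OkF V s X a ∧ p ⊆ a := by
      intro p hp hps
      obtain ⟨v, hvX, hvp⟩ := hXp p hp hps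
      obtain ⟨a, h1, h2, h3, h4, h5⟩ := F1 hV hp.1 hs hps (hXs hvX) hvp
      exact ⟨a, ⟨h1, h3, h4, fun h => h5 (h hvX)⟩, h2⟩
    have hwithin : ∀ a, OkF V s X a → ∀ p q, Good V k S p → Good V k S q → p ⊆ a → q ⊆ a →
        Relation.ReflTransGen (GAdj V k S) p q := by
      intro a ha
      exact ih a ha.1 (by have := ha.2.2.1; omega) (hXa a ha)
    intro p q hp hq hps hqs
    obtain ⟨a, ha, hpa⟩ := hin p hp hps
    obtain ⟨b, hb, hqb⟩ := hin q hq hqs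
    have hpath := F3 hV hs (by omega) hXs hXne ha hb
    have : ∀ q, Good V k S q → q ⊆ b → Relation.ReflTransGen (GAdj V k S) p q := by
      clear hqb hqs hq q hb
      induction hpath with
      | refl => intro q hq hqa; exact hwithin a ha p q hp hq hpa hqa
      | tail _ hadj ih2 =>
        rename_i b' c'
        intro q hq hqc
        obtain ⟨hb', hc', B, hB, hBb, hBc, hrB⟩ := hadj
        have h1 := Finset.card_le_card (rst_mono (S := S) hBb)
        have h2 := hXa _ hb'
        obtain ⟨r, hr, hrB'⟩ := exists_good hV hkn S (fun t ht => (hS t ht).1) m B hB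
          (by omega) (by omega)
        exact (ih2 r hr (hrB'.trans hBb)).trans (hwithin _ hc' r q hr hq (hrB'.trans hBc) hqc)
    exact this q hq hqb

theorem sum_eq_dot (u v : Fin n → ℝ) : ∑ i, u i * v i = u ⬝ᵥ v := rfl

theorem hull_le (V : Finset (Fin n → ℝ)) (u : Fin n → ℝ) (M : ℝ) (h : ∀ v ∈ V, u ⬝ᵥ v ≤ M) :
    ∀ x ∈ convexHull ℝ (V : Set (Fin n → ℝ)), u ⬝ᵥ x ≤ M := by
  intro x hx
  have hc : Convex ℝ {x : Fin n → ℝ | u ⬝ᵥ x ≤ M} := by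
    intro y hy z hz a b ha hb hab
    have hy' : u ⬝ᵥ y ≤ M := hy
    have hz' : u ⬝ᵥ z ≤ M := hz
    have h1 := mul_le_mul_of_nonneg_left hy' ha
    have h2 := mul_le_mul_of_nonneg_left hz' hb
    have h3 : a * M + b * M = M := by rw [← add_mul, hab, one_mul]
    show u ⬝ᵥ (a • y + b • z) ≤ M
    rw [dotProduct_add, dotProduct_smul, dotProduct_smul, smul_eq_mul, smul_eq_mul]
    linarith
  exact convexHull_min (fun v hv => h v hv) hc hx

theorem maxFace_sub_iff {V : Finset (Fin n → ℝ)} (hV : V.Nonempty) (w u : Fin n → ℝ) :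
    maxFace (convexHull ℝ (V : Set (Fin n → ℝ))) w ⊆ maxFace (convexHull ℝ (V : Set (Fin n → ℝ))) u ↔
      argm V w ⊆ argm V u := by
  constructor
  · intro h v hv
    have hv' := mem_argm.1 hv
    have h1 : v ∈ maxFace (convexHull ℝ (V : Set (Fin n → ℝ))) w :=
      ⟨subset_convexHull ℝ _ hv'.1, hull_le V w _ hv'.2⟩
    have h2 := h h1
    exact mem_argm.2 ⟨hv'.1, fun v' hv' => h2.2 v' (subset_convexHull ℝ _ hv')⟩
  · rintro h x ⟨hx, hmax⟩
    refine ⟨hx, ?_⟩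
    obtain ⟨v0, hv0⟩ := argm_nonempty hV w
    have hv0w := mem_argm.1 hv0
    have hv0u := mem_argm.1 (h hv0)
    have hxu : u ⬝ᵥ x = u ⬝ᵥ v0 := by
      obtain ⟨c, hc0, hc1, hcx⟩ := Finset.mem_convexHull'.1 hx
      have hdot : ∀ z : Fin n → ℝ, z ⬝ᵥ x = ∑ v ∈ V, c v * (z ⬝ᵥ v) := by
        intro z
        rw [← hcx, dotProduct_sum]
        exact Finset.sum_congr rfl fun v _ => by rw [dotProduct_smul, smul_eq_mul]
      have hwx : w ⬝ᵥ v0 ≤ w ⬝ᵥ x := hmax v0 (subset_convexHull ℝ _ hv0w.1)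
      have hz : ∑ v ∈ V, c v * (w ⬝ᵥ v0 - w ⬝ᵥ v) = 0 := by
        apply le_antisymm
        · simp only [mul_sub]
          rw [Finset.sum_sub_distrib, ← Finset.sum_mul, hc1, ← hdot]
          linarith
        · exact Finset.sum_nonneg fun v hv =>
            mul_nonneg (hc0 v hv) (sub_nonneg.2 (hv0w.2 v hv))
      have hz' := (Finset.sum_eq_zero_iff_of_nonneg (fun v hv =>
            mul_nonneg (hc0 v hv) (sub_nonneg.2 (hv0w.2 v hv)))).1 hz
      rw [hdot]
      have : ∀ v ∈ V, c v * (u ⬝ᵥ v) = c v * (u ⬝ᵥ v0) := by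
        intro v hv
        rcases mul_eq_zero.1 (hz' v hv) with h0 | h0
        · rw [h0]; simp
        · have hva : v ∈ argm V w := mem_argm.2 ⟨hv, fun v' hv' => by
            have := hv0w.2 v' hv'; linarith⟩
          rw [self_mem_Lc_argm v (h hva) v0 (h hv0)]
      rw [Finset.sum_congr rfl this, ← Finset.sum_mul, hc1, one_mul]
    intro y hy
    rw [sum_eq_dot, sum_eq_dot, hxu]
    exact hull_le V u _ hv0u.2 y hy

theorem polyDim_cone {V : Finset (Fin n → ℝ)} (hV : V.Nonempty) (w : Fin n → ℝ) :
    polyDim (normalFanCone (convexHull ℝ (V : Set (Fin n → ℝ))) w) = rk (argm V w) := by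
  have hmem : ∀ u, u ∈ normalFanCone (convexHull ℝ (V : Set (Fin n → ℝ))) w ↔
      argm V w ⊆ argm V u := fun u => maxFace_sub_iff hV w u
  have heq : vectorSpan ℝ (normalFanCone (convexHull ℝ (V : Set (Fin n → ℝ))) w) =
      Lc (argm V w) := by
    apply le_antisymm
    · rw [vectorSpan_def, Submodule.span_le]
      rintro _ ⟨y, hy, z, hz, rfl⟩
      have hy' : y ∈ Lc (argm V w) := Lc_anti ((hmem y).1 hy) self_mem_Lc_argm
      have hz' : z ∈ Lc (argm V w) := Lc_anti ((hmem z).1 hz) self_mem_Lc_argm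
      exact (Lc (argm V w)).sub_mem hy' hz'
    · intro u hu
      obtain ⟨ε, hε, h⟩ := argm_perturb hV w u
      rw [argm_of_Lc hu] at h
      have h1 : w + ε • u ∈ normalFanCone (convexHull ℝ (V : Set (Fin n → ℝ))) w :=
        (hmem _).2 h.ge
      have h2 : w ∈ normalFanCone (convexHull ℝ (V : Set (Fin n → ℝ))) w :=
        (hmem _).2 subset_rfl
      have h3 := vsub_mem_vectorSpan ℝ h1 h2
      have h4 := Submodule.smul_mem _ ε⁻¹ h3
      simpa [smul_smul, inv_mul_cancel₀ hε.ne'] using h4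
  rw [polyDim, heq, rk]

theorem core {k : ℕ} (hk : 1 ≤ k) (hkn : k ≤ n) (V : Finset (Fin n → ℝ))
    (hfull : affineSpan ℝ (convexHull ℝ (V : Set (Fin n → ℝ))) = ⊤)
    (C : PolyhedralComplex n)
    (hfaces : C.faces = {S | ∃ w : Fin n → ℝ,
      S = normalFanCone (convexHull ℝ (V : Set (Fin n → ℝ))) w ∧
        polyDim (normalFanCone (convexHull ℝ (V : Set (Fin n → ℝ))) w) ≤ k}) :
    C.ConnectedThroughCodimOne k k := by
  classical
  rw [affineSpan_convexHull] at hfull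
  have hV : V.Nonempty := by
    rw [Finset.nonempty_iff_ne_empty]
    rintro rfl
    rw [Finset.coe_empty, AffineSubspace.span_empty] at hfull
    exact AffineSubspace.bot_ne_top ℝ (Fin n → ℝ) (Fin n → ℝ) hfull
  set cone : Finset (Fin n → ℝ) → Set (Fin n → ℝ) := fun A => {u | A ⊆ argm V u} with hcone
  have hN : ∀ w, normalFanCone (convexHull ℝ (V : Set (Fin n → ℝ))) w = cone (argm V w) := by
    intro w; ext u; exact maxFace_sub_iff hV w u
  have hdim : ∀ A, Fc V A → polyDim (cone A) = rk A := by
    rintro A ⟨w, rfl⟩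
    rw [← hN, polyDim_cone hV]
  have hface : ∀ S, S ∈ C.faces ↔ ∃ A, Fc V A ∧ S = cone A ∧ rk A ≤ k := by
    intro S
    rw [hfaces]
    constructor
    · rintro ⟨w, rfl, h⟩
      rw [polyDim_cone hV] at h
      exact ⟨argm V w, ⟨w, rfl⟩, hN w, h⟩
    · rintro ⟨_, ⟨w, rfl⟩, rfl, h⟩
      exact ⟨w, (hN w).symm, by rw [polyDim_cone hV]; exact h⟩
  have hsub : ∀ A B, Fc V A → Fc V B → (cone A ⊆ cone B ↔ B ⊆ A) := by
    rintro A B ⟨w, rfl⟩ hB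
    constructor
    · intro h
      exact h (show w ∈ cone (argm V w) from Finset.Subset.refl (argm V w))
    · intro h u hu
      exact h.trans hu
  have hfacet : ∀ S, S ∈ C.facets k ↔ ∃ A, Fc V A ∧ S = cone A ∧ rk A = k := by
    intro S
    constructor
    · rintro ⟨h, hd⟩
      obtain ⟨A, hA, rfl, _⟩ := (hface S).1 h
      exact ⟨A, hA, rfl, by rw [← hdim A hA, hd]⟩
    · rintro ⟨A, hA, rfl, h⟩
      exact ⟨(hface _).2 ⟨A, hA, rfl, h.le⟩, by rw [hdim A hA, h]⟩
  have hVfc : Fc V V := ⟨0, (argm_of_Lc (Submodule.zero_mem _)).symm⟩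
  have hVrk : rk V = 0 := by
    have : Lc V = ⊥ := by
      rw [eq_bot_iff]
      intro u hu
      have hvs : vectorSpan ℝ (V : Set (Fin n → ℝ)) = ⊤ := by
        rw [← direction_affineSpan, hfull, AffineSubspace.direction_top]
      have hu' : ∀ y ∈ vectorSpan ℝ (V : Set (Fin n → ℝ)), u ⬝ᵥ y = 0 := by
        intro y hy
        rw [vectorSpan_def] at hy
        induction hy using Submodule.span_induction with
        | mem y hy =>
          obtain ⟨a, ha, b, hb, rfl⟩ := hy
          simp only [vsub_eq_sub]
          rw [dotProduct_sub, hu a ha b hb, sub_self]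
        | zero => simp
        | add a b _ _ h1 h2 => rw [dotProduct_add, h1, h2, add_zero]
        | smul c a _ h => rw [dotProduct_smul, h, smul_zero]
      have := hu' u (by rw [hvs]; trivial)
      exact dotProduct_self_eq_zero.1 this
    rw [rk, this, finrank_bot]
  intro G hG hGc P hP Q hQ hPG hQG
  obtain ⟨p, hp, rfl, hpk⟩ := (hfacet P).1 hP
  obtain ⟨q, hq, rfl, hqk⟩ := (hfacet Q).1 hQ
  set S : Finset (Finset (Fin n → ℝ)) :=
    V.powerset.filter (fun A => Fc V A ∧ cone A ∈ G) with hSdef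
  have hSmem : ∀ A, A ∈ S ↔ Fc V A ∧ cone A ∈ G := by
    intro A
    rw [hSdef, Finset.mem_filter, Finset.mem_powerset]
    exact ⟨fun h => h.2, fun h => ⟨h.1.sub, h⟩⟩
  have hinj : ∀ A B, Fc V A → Fc V B → cone A = cone B → A = B := by
    intro A B hA hB h
    exact Finset.Subset.antisymm ((hsub B A hB hA).1 h.ge) ((hsub A B hA hB).1 h.le)
  have hScard : S.card ≤ G.card := by
    refine Finset.card_le_card_of_injOn cone (fun A hA => ((hSmem A).1 hA).2) ?_
    intro A hA B hB h
    exact hinj A B ((hSmem A).1 hA).1 ((hSmem B).1 hB).1 h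
  have hSprop : ∀ t ∈ S, Fc V t ∧ rk t = k := by
    intro t ht
    obtain ⟨h1, h2⟩ := (hSmem t).1 ht
    refine ⟨h1, ?_⟩
    rw [← hdim t h1]
    exact (hG h2).2
  have hrst : (rst S V).card ≤ S.card := Finset.card_le_card fun t ht => (mem_rst.1 ht).1
  have hpath := main_conn hV hkn S hSprop (k - 1) V hVfc (by omega) (by omega) p q
    ⟨hp, hpk, fun h => hPG ((hSmem p).1 h).2⟩ ⟨hq, hqk, fun h => hQG ((hSmem q).1 h).2⟩
    hp.sub hq.sub
  refine Relation.ReflTransGen.lift (p := C.Adj k G) cone ?_ _ _ hpath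
  rintro a b ⟨⟨ha1, ha2, ha3⟩, ⟨hb1, hb2, hb3⟩, R, hR1, hR2, haR, hbR, hRS⟩
  refine ⟨(hfacet _).2 ⟨a, ha1, rfl, ha2⟩, (hfacet _).2 ⟨b, hb1, rfl, hb2⟩,
    fun h => ha3 ((hSmem a).2 ⟨ha1, h⟩), fun h => hb3 ((hSmem b).2 ⟨hb1, h⟩),
    cone R, ⟨(hface _).2 ⟨R, hR1, rfl, by omega⟩, by rw [hdim R hR1, hR2]⟩,
    (hsub R a hR1 ha1).2 haR, (hsub R b hR1 hb1).2 hbR, ?_⟩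
  intro F hF hRF
  obtain ⟨t, ht, rfl, _⟩ := (hfacet F).1 (hG hF)
  exact hRS t ((hSmem t).2 ⟨ht, hF⟩) ((hsub R t hR1 ht).1 hRF)

end


/-- the `k`-dimensional skeleton of the normal fan of a rational
full-dimensional polytope `P ⊂ ℝ^n` is `k`-connected through codimension one. -/
theorem skeleton_normal_fan_connected
    {n k : ℕ} (hk : 1 ≤ k) (hkn : k ≤ n)
    (V : Finset (Fin n → ℚ)) (P : Set (Fin n → ℝ))
    (hP : P = convexHull ℝ
      ((fun v : Fin n → ℚ => fun i => (v i : ℝ)) '' (V : Set (Fin n → ℚ))))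
    (hfull : affineSpan ℝ P = ⊤)
    (C : PolyhedralComplex n)
    (hfaces : C.faces = {S | ∃ w : Fin n → ℝ,
      S = normalFanCone P w ∧ polyDim (normalFanCone P w) ≤ k}) :
    C.ConnectedThroughCodimOne k k := by
  classical
  subst hP
  have hV : ((fun v : Fin n → ℚ => fun i => (v i : ℝ)) '' (V : Set (Fin n → ℚ))) =
      ((V.image (fun v : Fin n → ℚ => fun i => (v i : ℝ)) : Finset (Fin n → ℝ)) :
        Set (Fin n → ℝ)) := by
    rw [Finset.coe_image]
  rw [hV] at hfull hfaces
  exact core hk hkn _ hfull C hfaces
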